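/- Let N ≥ 1 and let m_k, s_k, u : ℝ × ℝ → ℝ (k ∈ {1,…,N}) be differentiable functions of (t, x), let T_k : ℝ × ℝ → ℝ with T_k > 0 everywhere, and let G_k : ℝ × ℝ → ℝ. Suppose at every point: ∂_t m_k + ∂_x(m_k u) = 0 for each k, and m_k T_k (∂_t s_k + u ∂_x s_k) = G_k for each k. Define ρ = ∑_{k=1}^N m_k and assume ρ > 0, and set s = (∑_{k=1}^N m_k s_k)/ρ. Then at every point, ρ (∂_t s + u ∂_x s) = ∑_{k=1}^N G_k / T_k. -/

import Mathlib

open Finset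

/-- Partial derivative with respect to the first (time) variable. -/
noncomputable def pt (f : ℝ × ℝ → ℝ) (z : ℝ × ℝ) : ℝ :=
  deriv (fun s => f (s, z.2)) z.1

/-- Partial derivative with respect to the second (space) variable. -/
noncomputable def px (f : ℝ × ℝ → ℝ) (z : ℝ × ℝ) : ℝ :=
  deriv (fun y => f (z.1, y)) z.2

/-!
Mass-weighting commutes with the material derivative `D/Dt`. Differentiating `s = (∑ mₖ sₖ) / ρ`
gives `ρ Ds/Dt = ∑ (mₖ Dsₖ/Dt + (sₖ - s) Dmₖ/Dt)`. Mass conservation makes all partial densities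
grow at the same rate, `Dmₖ/Dt = -(∂ₓu) mₖ`, so the second part is `-(∂ₓu) ∑ mₖ (sₖ - s) = 0`.
-/

section WeightedMean

variable {ι α 𝕜 : Type*} [Fintype ι]

/-- The mean of the `f k` with weights `w k`, taken pointwise; for mass weights and phase entropies
it is the mixture entropy. It is `0` by convention where the total weight vanishes. -/
noncomputable def weightedMean [Field 𝕜] (w f : ι → α → 𝕜) (a : α) : 𝕜 :=
  (∑ k, w k a * f k a) / ∑ k, w k a

theorem sum_mul_sub_weightedMean_eq_zero [Field 𝕜] (w f : ι → α → 𝕜) {a : α}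
    (hw : ∑ k, w k a ≠ 0) : ∑ k, w k a * (f k a - weightedMean w f a) = 0 := by
  simp only [mul_sub, sum_sub_distrib, ← sum_mul]
  rw [weightedMean, mul_div_cancel₀ _ hw, sub_self]

theorem sum_mul_deriv_weightedMean [NontriviallyNormedField 𝕜] {w f : ι → 𝕜 → 𝕜} {x : 𝕜}
    (hw : ∀ k, DifferentiableAt 𝕜 (w k) x) (hf : ∀ k, DifferentiableAt 𝕜 (f k) x)
    (hw₀ : ∑ k, w k x ≠ 0) :
    (∑ k, w k x) * deriv (weightedMean w f) x =
      ∑ k, (w k x * deriv (f k) x + (f k x - weightedMean w f x) * deriv (w k) x) := by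
  have quotient_rule : deriv (weightedMean w f) x =
      ((∑ k, (deriv (w k) x * f k x + w k x * deriv (f k) x)) * (∑ k, w k x)
        - (∑ k, w k x * f k x) * ∑ k, deriv (w k) x) / (∑ k, w k x) ^ 2 :=
    ((HasDerivAt.fun_sum fun k _ => (hw k).hasDerivAt.fun_mul (hf k).hasDerivAt).fun_div
      (HasDerivAt.fun_sum fun k _ => (hw k).hasDerivAt) hw₀).deriv
  calc (∑ k, w k x) * deriv (weightedMean w f) x
      = ∑ k, (deriv (w k) x * f k x + w k x * deriv (f k) x)
          - weightedMean w f x * ∑ k, deriv (w k) x := by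
        rw [quotient_rule, weightedMean]
        field_simp
    _ = ∑ k, (w k x * deriv (f k) x + (f k x - weightedMean w f x) * deriv (w k) x) := by
        rw [mul_sum, ← sum_sub_distrib]
        exact sum_congr rfl fun k _ => by ring

end WeightedMean

/-- Existence at `z` of both partial derivatives `pt f z` and `px f z`, the only regularity that
makes these two `deriv`s meaningful; joint differentiability is not implied. -/
structure PartiallyDifferentiableAt (f : ℝ × ℝ → ℝ) (z : ℝ × ℝ) : Prop where
  time : DifferentiableAt ℝ (fun t => f (t, z.2)) z.1
  space : DifferentiableAt ℝ (fun x => f (z.1, x)) z.2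

theorem PartiallyDifferentiableAt.of_differentiableAt {f : ℝ × ℝ → ℝ} {z : ℝ × ℝ}
    (hf : DifferentiableAt ℝ f z) : PartiallyDifferentiableAt f z where
  time := by fun_prop
  space := by fun_prop

/-- The material derivative `D/Dt = ∂ₜ + u ∂ₓ` of `f` along the velocity field `u`. -/
noncomputable def materialDeriv (u f : ℝ × ℝ → ℝ) (z : ℝ × ℝ) : ℝ :=
  pt f z + u z * px f z

theorem pt_add_px_mul_eq_materialDeriv_add {m u : ℝ × ℝ → ℝ} {z : ℝ × ℝ}
    (hm : DifferentiableAt ℝ (fun x => m (z.1, x)) z.2)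
    (hu : DifferentiableAt ℝ (fun x => u (z.1, x)) z.2) :
    pt m z + px (fun q => m q * u q) z = materialDeriv u m z + px u z * m z := by
  have product_rule : px (fun q => m q * u q) z = px m z * u z + m z * px u z :=
    deriv_fun_mul hm hu
  rw [product_rule, materialDeriv]
  ring

section Mixture

variable {ι : Type*} [Fintype ι] {m s : ι → ℝ × ℝ → ℝ} {u : ℝ × ℝ → ℝ} {z : ℝ × ℝ}

theorem sum_mul_materialDeriv_weightedMean
    (hm : ∀ k, PartiallyDifferentiableAt (m k) z) (hs : ∀ k, PartiallyDifferentiableAt (s k) z)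
    (hρ : ∑ k, m k z ≠ 0) :
    (∑ k, m k z) * materialDeriv u (weightedMean m s) z =
      ∑ k, (m k z * materialDeriv u (s k) z
        + (s k z - weightedMean m s z) * materialDeriv u (m k) z) := by
  have time_part : (∑ k, m k z) * pt (weightedMean m s) z =
      ∑ k, (m k z * pt (s k) z + (s k z - weightedMean m s z) * pt (m k) z) :=
    sum_mul_deriv_weightedMean (fun k => (hm k).time) (fun k => (hs k).time) hρ
  have space_part : (∑ k, m k z) * px (weightedMean m s) z =
      ∑ k, (m k z * px (s k) z + (s k z - weightedMean m s z) * px (m k) z) :=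
    sum_mul_deriv_weightedMean (fun k => (hm k).space) (fun k => (hs k).space) hρ
  simp only [materialDeriv]
  rw [mul_add, mul_left_comm, time_part, space_part, mul_sum, ← sum_add_distrib]
  exact sum_congr rfl fun k _ => by ring

theorem sum_mul_materialDeriv_weightedMean_of_mass_conservation
    (hm : ∀ k, PartiallyDifferentiableAt (m k) z) (hs : ∀ k, PartiallyDifferentiableAt (s k) z)
    (hu : DifferentiableAt ℝ (fun x => u (z.1, x)) z.2)
    (hmass : ∀ k, pt (m k) z + px (fun q => m k q * u q) z = 0)
    (hρ : ∑ k, m k z ≠ 0) :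
    (∑ k, m k z) * materialDeriv u (weightedMean m s) z =
      ∑ k, m k z * materialDeriv u (s k) z := by
  have common_rate (k : ι) : materialDeriv u (m k) z = -px u z * m k z := by
    linarith [hmass k, pt_add_px_mul_eq_materialDeriv_add (hm k).space hu]
  have transport_cancels :
      ∑ k, (s k z - weightedMean m s z) * materialDeriv u (m k) z = 0 := by
    calc ∑ k, (s k z - weightedMean m s z) * materialDeriv u (m k) z
        = -px u z * ∑ k, m k z * (s k z - weightedMean m s z) := by
          rw [mul_sum]
          exact sum_congr rfl fun k _ => by rw [common_rate]; ring
      _ = 0 := by rw [sum_mul_sub_weightedMean_eq_zero m s hρ, mul_zero]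
  rw [sum_mul_materialDeriv_weightedMean hm hs hρ, sum_add_distrib, transport_cancels, add_zero]

theorem mixture_entropy_equation_general {T G : ι → ℝ × ℝ → ℝ}
    (hm : ∀ k, PartiallyDifferentiableAt (m k) z) (hs : ∀ k, PartiallyDifferentiableAt (s k) z)
    (hu : DifferentiableAt ℝ (fun x => u (z.1, x)) z.2)
    (hT : ∀ k, T k z ≠ 0)
    (hmass : ∀ k, pt (m k) z + px (fun q => m k q * u q) z = 0)
    (hent : ∀ k, m k z * T k z * materialDeriv u (s k) z = G k z)
    (hρ : ∑ k, m k z ≠ 0) :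
    (∑ k, m k z) * materialDeriv u (weightedMean m s) z = ∑ k, G k z / T k z := by
  rw [sum_mul_materialDeriv_weightedMean_of_mass_conservation hm hs hu hmass hρ]
  refine sum_congr rfl fun k _ => eq_div_of_mul_eq (hT k) ?_
  rw [← hent k, mul_right_comm]

end Mixture

/-- Mixture entropy equation (Section 2.5): with mass-additive mixture entropy
ρ s = ∑ m_k s_k, phase mass conservation and the phase entropy equations
m_k T_k Ds_k/Dt = G_k imply ρ Ds/Dt = ∑ G_k/T_k. -/
theorem mixture_entropy_equation (N : ℕ) (hN : 1 ≤ N)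
    (m s T G : Fin N → ℝ × ℝ → ℝ) (u : ℝ × ℝ → ℝ)
    (hm : ∀ k, Differentiable ℝ (m k)) (hs : ∀ k, Differentiable ℝ (s k))
    (hu : Differentiable ℝ u)
    (hT : ∀ k z, 0 < T k z)
    (hmass : ∀ k z, pt (m k) z + px (fun q => m k q * u q) z = 0)
    (hent : ∀ k z, m k z * T k z * (pt (s k) z + u z * px (s k) z) = G k z)
    (hρpos : ∀ z : ℝ × ℝ, 0 < ∑ k, m k z) :
    ∀ z : ℝ × ℝ,
      (∑ k, m k z)
        * (pt (fun q => (∑ k, m k q * s k q) / ∑ k, m k q) z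
            + u z * px (fun q => (∑ k, m k q * s k q) / ∑ k, m k q) z)
      = ∑ k, G k z / T k z :=
  fun z => mixture_entropy_equation_general (fun k => .of_differentiableAt (hm k z))
    (fun k => .of_differentiableAt (hs k z))
    (PartiallyDifferentiableAt.of_differentiableAt (hu z)).space
    (fun k => (hT k z).ne') (hmass · z) (hent · z) (hρpos z).ne'
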